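/- arXiv:2308.13732 — 2 statements merged into one kernel-verified Lean document; each statement's English description precedes it below -/
import Mathlib

section
/- Fix an integer m ≥ 1 and m distinct points t¹, …, t^m ∈ ℝ^N, and for l = 1, …, m define the Voronoi cell Γ_l = {t ∈ ℝ^N : ρ̃(t, t^l) = min_{1≤k≤m} ρ̃(t, t^k)}. Then each Γ_l satisfies the following anisotropic star shape property at t^l: if t ∈ Γ_l, then for every ε ∈ (0,1) the point t^l + ε^E (t − t^l), whose j-th coordinate is t^l_j + ε^{1/H_j}(t_j − t^l_j) (where E = diag(1/H₁, …, 1/H_N)), also belongs to Γ_l. (Lemma 2.2(ii).) -/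
open MeasureTheory

/-- The anisotropic metric `ρ̃(t,s) = max_{1 ≤ j ≤ N} |t_j - s_j|^{H_j}`. -/
noncomputable def rhoTilde {N : ℕ} (H : Fin N → ℝ) (t s : Fin N → ℝ) : ℝ :=
  ⨆ j, |t j - s j| ^ H j

/-!
A coordinate `j` that realises `ρ̃(x, b)` satisfies `|x_j - a_j| ≤ |x_j - b_j|` as soon as
`ρ̃(x, a) ≤ ρ̃(x, b)`. Moving `x_j` towards `a_j` by the factor `δ = ε^{1/H_j}` displaces it by
`(1 - δ) |x_j - a_j|`, so its distance to `b_j` shrinks at most by the factor `δ`. Hence the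
dilation about `a` multiplies `ρ̃(·, a)` by exactly `ε`, but `ρ̃(·, b)` by at least `ε`, and the
inequality `ρ̃(·, a) ≤ ρ̃(·, b)` survives.
-/

theorem mul_dist_le_dist_lineMap {V P : Type*} [SeminormedAddCommGroup V] [NormedSpace ℝ V]
    [PseudoMetricSpace P] [NormedAddTorsor V P] {a b x : P} {δ : ℝ} (hδ : δ ≤ 1)
    (h : dist x a ≤ dist x b) : δ * dist x b ≤ dist (AffineMap.lineMap a x δ) b := by
  have triangle : dist x b ≤ (1 - δ) * dist x a + dist (AffineMap.lineMap a x δ) b :=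
    calc dist x b ≤ dist x (AffineMap.lineMap a x δ) + dist (AffineMap.lineMap a x δ) b :=
          dist_triangle _ _ _
      _ = (1 - δ) * dist x a + dist (AffineMap.lineMap a x δ) b := by
          rw [dist_right_lineMap, Real.norm_of_nonneg (sub_nonneg.2 hδ), dist_comm a x]
  have displacement : (1 - δ) * dist x a ≤ (1 - δ) * dist x b :=
    mul_le_mul_of_nonneg_left h (sub_nonneg.2 hδ)
  linarith

theorem rpow_one_div_mul_rpow {ε p c : ℝ} (hε : 0 ≤ ε) (hp : p ≠ 0) (hc : 0 ≤ c) :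
    (ε ^ (1 / p) * c) ^ p = ε * c ^ p := by
  rw [Real.mul_rpow (Real.rpow_nonneg hε _) hc, one_div, Real.rpow_inv_rpow hε hp]

section RhoTilde

variable {N : ℕ} {H : Fin N → ℝ} {a b x : Fin N → ℝ} {ε : ℝ}

theorem rhoTilde_nonneg (H x a : Fin N → ℝ) : 0 ≤ rhoTilde H x a :=
  Real.iSup_nonneg fun _ => Real.rpow_nonneg (abs_nonneg _) _

theorem abs_sub_rpow_le_rhoTilde (H x a : Fin N → ℝ) (j : Fin N) :
    |x j - a j| ^ H j ≤ rhoTilde H x a :=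
  le_ciSup (f := fun i => |x i - a i| ^ H i) (Set.finite_range _).bddAbove j

theorem exists_abs_sub_rpow_eq_rhoTilde [NeZero N] (H x a : Fin N → ℝ) :
    ∃ j, |x j - a j| ^ H j = rhoTilde H x a :=
  exists_eq_ciSup_of_finite (f := fun i => |x i - a i| ^ H i)

/-- The map `x ↦ a + ε^E (x - a)`, `E = diag(1/H₁, …, 1/H_N)`: the dilation about `a` under which
`ρ̃(·, a)` is homogeneous. -/
noncomputable def anisotropicDilation (H a : Fin N → ℝ) (ε : ℝ) (x : Fin N → ℝ) : Fin N → ℝ :=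
  fun j => a j + ε ^ (1 / H j) * (x j - a j)

theorem anisotropicDilation_apply_eq_lineMap (H a : Fin N → ℝ) (ε : ℝ) (x : Fin N → ℝ)
    (j : Fin N) :
    anisotropicDilation H a ε x j = AffineMap.lineMap (a j) (x j) (ε ^ (1 / H j)) :=
  add_comm _ _

theorem rhoTilde_anisotropicDilation_self (hH : ∀ j, H j ≠ 0) (hε : 0 ≤ ε) :
    rhoTilde H (anisotropicDilation H a ε x) a = ε * rhoTilde H x a := by
  unfold rhoTilde
  rw [Real.mul_iSup_of_nonneg hε]
  congr 1 with j
  rw [anisotropicDilation, add_sub_cancel_left, abs_mul, abs_of_nonneg (Real.rpow_nonneg hε _),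
    rpow_one_div_mul_rpow hε (hH j) (abs_nonneg _)]

theorem mul_rhoTilde_le_rhoTilde_anisotropicDilation [NeZero N] (hH : ∀ j, 0 < H j)
    (hε : ε ∈ Set.Icc 0 1) (hab : rhoTilde H x a ≤ rhoTilde H x b) :
    ε * rhoTilde H x b ≤ rhoTilde H (anisotropicDilation H a ε x) b := by
  obtain ⟨j, hj⟩ := exists_abs_sub_rpow_eq_rhoTilde H x b
  have closer : dist (x j) (a j) ≤ dist (x j) (b j) := by
    rw [Real.dist_eq, Real.dist_eq, ← Real.rpow_le_rpow_iff (abs_nonneg _) (abs_nonneg _) (hH j),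
      hj]
    exact (abs_sub_rpow_le_rhoTilde H x a j).trans hab
  have δ_nonneg : 0 ≤ ε ^ (1 / H j) := Real.rpow_nonneg hε.1 _
  have δ_le_one : ε ^ (1 / H j) ≤ 1 :=
    Real.rpow_le_one hε.1 hε.2 (one_div_nonneg.2 (hH j).le)
  have shrink : ε ^ (1 / H j) * |x j - b j| ≤ |anisotropicDilation H a ε x j - b j| := by
    rw [anisotropicDilation_apply_eq_lineMap]
    exact mul_dist_le_dist_lineMap δ_le_one closer
  calc ε * rhoTilde H x b = (ε ^ (1 / H j) * |x j - b j|) ^ H j := by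
        rw [rpow_one_div_mul_rpow hε.1 (hH j).ne' (abs_nonneg _), hj]
    _ ≤ |anisotropicDilation H a ε x j - b j| ^ H j :=
        Real.rpow_le_rpow (mul_nonneg δ_nonneg (abs_nonneg _)) shrink (hH j).le
    _ ≤ rhoTilde H (anisotropicDilation H a ε x) b := abs_sub_rpow_le_rhoTilde H _ b j

theorem rhoTilde_anisotropicDilation_le_of_le [NeZero N] (hH : ∀ j, 0 < H j)
    (hε : ε ∈ Set.Icc 0 1) (hab : rhoTilde H x a ≤ rhoTilde H x b) :
    rhoTilde H (anisotropicDilation H a ε x) a ≤ rhoTilde H (anisotropicDilation H a ε x) b :=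
  calc rhoTilde H (anisotropicDilation H a ε x) a = ε * rhoTilde H x a :=
        rhoTilde_anisotropicDilation_self (fun j => (hH j).ne') hε.1
    _ ≤ ε * rhoTilde H x b := mul_le_mul_of_nonneg_left hab hε.1
    _ ≤ rhoTilde H (anisotropicDilation H a ε x) b :=
        mul_rhoTilde_le_rhoTilde_anisotropicDilation hH hε hab

end RhoTilde

section VoronoiCell

variable {N : ℕ} {H : Fin N → ℝ} {ι : Type*} {t : ι → Fin N → ℝ} {l : ι} {x : Fin N → ℝ} {ε : ℝ}

/-- The Voronoi cell `Γ_l` of the site `t l` with respect to `ρ̃`. The family of sites may be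
infinite: a point lies in the cell when the infimum of its `ρ̃`-distances to the sites is attained
at `t l`. -/
def voronoiCell (H : Fin N → ℝ) (t : ι → Fin N → ℝ) (l : ι) : Set (Fin N → ℝ) :=
  {x | rhoTilde H x (t l) = ⨅ k, rhoTilde H x (t k)}

theorem mem_voronoiCell_iff_forall_le :
    x ∈ voronoiCell H t l ↔ ∀ k, rhoTilde H x (t l) ≤ rhoTilde H x (t k) := by
  have : Nonempty ι := ⟨l⟩
  have bdd : BddBelow (Set.range fun k => rhoTilde H x (t k)) :=
    ⟨0, Set.forall_mem_range.2 fun k => rhoTilde_nonneg H x (t k)⟩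
  exact ⟨fun hx k => hx.trans_le (ciInf_le bdd k),
    fun hx => le_antisymm (le_ciInf hx) (ciInf_le bdd l)⟩

theorem voronoi_star_shape_general [NeZero N] (hH : ∀ j, 0 < H j) (hε : ε ∈ Set.Icc 0 1)
    (hx : x ∈ voronoiCell H t l) : anisotropicDilation H (t l) ε x ∈ voronoiCell H t l := by
  rw [mem_voronoiCell_iff_forall_le] at hx ⊢
  exact fun k => rhoTilde_anisotropicDilation_le_of_le hH hε (hx k)

end VoronoiCell

/-- Lemma 2.2(ii): each Voronoi cell `Γ_l` (with respect to the anisotropic metric `ρ̃`)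
satisfies the anisotropic star shape property at its generating point `t^l`: if `x ∈ Γ_l`,
then for every `ε ∈ (0,1)` the point `t^l + ε^E (x - t^l)`, whose `j`-th coordinate is
`t^l_j + ε^{1/H_j} (x_j - t^l_j)`, belongs to `Γ_l`. -/
theorem voronoi_star_shape
    (N : ℕ) (hN : 1 ≤ N) (H : Fin N → ℝ) (hH : ∀ j, H j ∈ Set.Ioo (0 : ℝ) 1)
    (m : ℕ) (hm : 1 ≤ m) (t : Fin m → Fin N → ℝ) (ht : Function.Injective t)
    (l : Fin m) (x : Fin N → ℝ)
    (hx : rhoTilde H x (t l) = ⨅ k : Fin m, rhoTilde H x (t k))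
    (ε : ℝ) (hε : ε ∈ Set.Ioo (0 : ℝ) 1) :
    rhoTilde H (fun j => t l j + ε ^ (1 / H j) * (x j - t l j)) (t l) =
      ⨅ k : Fin m, rhoTilde H (fun j => t l j + ε ^ (1 / H j) * (x j - t l j)) (t k) := by
  have : NeZero N := ⟨Nat.one_le_iff_ne_zero.1 hN⟩
  exact voronoi_star_shape_general (fun j => (hH j).1) (Set.Ioo_subset_Icc_self hε) hx
end

section
/- There exists a positive integer M = M(N) depending only on N with the following property. For any bounded subset A of ℝ^N and any family 𝓑 = {Q(x) : x ∈ A} of closed intervals (rectangles) in ℝ^N such that Q(x) is centered at x for every x ∈ A and, for every two points x₁, x₂ of A, Q(x₁) and Q(x₂) can be translated to be concentric so that one is contained in the other, there exists a sequence {Q_i} in 𝓑 such that (i) A ⊆ ⋃_i Q_i, and (ii) the intervals {Q_i} can be divided into at most M families of pairwise disjoint intervals. (Lemma 2.4, Besicovitch's covering theorem for comparable intervals.) -/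
open Set

/-!
Truncating the half-widths at a bound for the diameter of `A` changes neither which points of `A` a
box contains nor which boxes centered in `A` meet, so the half-widths may be assumed bounded. Choose
centers greedily: among the points of `A` not yet covered, take one whose half-width is, in every
coordinate at once, at least `5 / 6` of every competitor's; this is where comparability enters. If
some point of `A` were never covered, the centers chosen would be infinitely many and uniformly
separated, which is impossible in a bounded set.

A box meets at most `9 ^ N` boxes chosen before it. Indeed, look at the earlier centers from the
center of the last box, whose half-width is `v`, and in each coordinate record the floor of
`2 * x / max a v`, where `x` is the position and `a` the half-width of the earlier box; it lies
between `-4` and `4`. If two boxes had the same record, the later center would lie in the earlier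
box, contradicting the choice of the centers. Hence a greedy coloring of the boxes needs at most
`9 ^ N + 1` colors.
-/

section LatticeOrderedGroup

variable {G : Type*} [AddCommGroup G] [Lattice G] [IsOrderedAddMonoid G] {x y a b d : G}

theorem mem_Icc_sub_add_iff_abs_sub_le : y ∈ Icc (x - a) (x + a) ↔ |y - x| ≤ a := by
  rw [abs_le', neg_sub, sub_le_iff_le_add', sub_le_comm, mem_Icc, and_comm]

theorem abs_sub_le_add_of_not_disjoint_Icc
    (h : ¬ Disjoint (Icc (x - a) (x + a)) (Icc (y - b) (y + b))) : |x - y| ≤ a + b := by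
  obtain ⟨z, hzx, hzy⟩ := not_disjoint_iff.1 h
  rw [mem_Icc_sub_add_iff_abs_sub_le] at hzx hzy
  calc |x - y| = |(x - z) + (z - y)| := by rw [sub_add_sub_cancel]
    _ ≤ |x - z| + |z - y| := abs_add_le _ _
    _ ≤ a + b := add_le_add (abs_sub_comm x z ▸ hzx) hzy

theorem le_inf_add_inf_of_le (ha : 0 ≤ a) (hb : 0 ≤ b) (hd : 0 ≤ d) (hxd : x ≤ d)
    (hx : x ≤ a + b) : x ≤ a ⊓ d + b ⊓ d := by
  simp only [inf_add, add_inf, le_inf_iff]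
  exact ⟨⟨hx, hxd.trans (le_add_of_nonneg_right hb)⟩,
    hxd.trans (le_add_of_nonneg_left ha), hxd.trans (le_add_of_nonneg_left hd)⟩

end LatticeOrderedGroup

section Greedy

variable {α : Type*}

theorem exists_coloring_of_wellFounded {κ : Type*} {r : α → α → Prop} (hr : WellFounded r)
    (hcard : ∀ y, {x | r x y}.encard < ENat.card κ) :
    ∃ c : α → κ, ∀ x y, r x y → c x ≠ c y := by
  cases isEmpty_or_nonempty α with
  | inl _ => exact ⟨isEmptyElim, isEmptyElim⟩
  | inr hα =>
    have : Nonempty κ := (ENat.card_ne_zero_iff_nonempty κ).1 (pos_of_gt (hcard hα.some)).ne'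
    have exists_fresh (T : Set κ) : ∃ a, T ≠ univ → a ∉ T := by
      by_cases hT : T = univ
      · exact ⟨Classical.arbitrary κ, fun h ↦ absurd hT h⟩
      · exact (ne_univ_iff_exists_notMem T).1 hT |>.imp fun a ha _ ↦ ha
    choose fresh hfresh using exists_fresh
    let c : α → κ := hr.fix fun y ih ↦ fresh {a | ∃ x, ∃ h : r x y, ih x h = a}
    have hc (y : α) : c y = fresh (c '' {x | r x y}) := by
      simp only [c]
      rw [hr.fix_eq]
      simp only [image, mem_ofPred_eq, exists_prop]
    have hne (y : α) : c '' {x | r x y} ≠ univ := by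
      intro h
      refine (encard_image_le c {x | r x y}).not_gt ?_
      rw [h, encard_univ]
      exact hcard y
    exact ⟨c, fun x y hxy hxc ↦ hfresh _ (hne y) (hc y ▸ hxc ▸ mem_image_of_mem c hxy)⟩

/-- The part of `A` left uncovered after `n` steps of a greedy selection: when `R` is left
uncovered, the next step adds the set `Q (pick R)` to the cover. -/
def uncovered (Q : α → Set α) (pick : Set α → α) (A : Set α) : ℕ → Set α
  | 0 => A
  | n + 1 => uncovered Q pick A n \ Q (pick (uncovered Q pick A n))

theorem uncovered_antitone (Q : α → Set α) (pick : Set α → α) (A : Set α) :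
    Antitone (uncovered Q pick A) :=
  antitone_nat_of_succ_le fun _ ↦ sdiff_subset

theorem mem_uncovered_of_forall_notMem {Q : α → Set α} {pick : Set α → α} {A : Set α} {y : α}
    (hy : y ∈ A) (h : ∀ n, (uncovered Q pick A n).Nonempty → y ∉ Q (pick (uncovered Q pick A n)))
    (n : ℕ) : y ∈ uncovered Q pick A n := by
  induction n with
  | zero => exact hy
  | succ n ih => exact ⟨ih, h n ⟨y, ih⟩⟩

theorem exists_greedy_selection [Nonempty α] {A : Set α} {Q : α → Set α} {P : α → α → Prop}
    (hQ : ∀ x ∈ A, x ∈ Q x) (hP : ∀ R ⊆ A, R.Nonempty → ∃ x ∈ R, ∀ z ∈ R, P x z) :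
    ∃ s ⊆ A, ∃ t : α → ℕ, InjOn t s ∧
      (∀ x ∈ s, ∀ y ∈ s, t x < t y → P x y ∧ y ∉ Q x) ∧
      ∀ y ∈ A, (∃ x ∈ s, y ∈ Q x) ∨ s.Infinite ∧ ∀ x ∈ s, P x y := by
  choose! pick hpick hpickP using hP
  let R := uncovered Q pick A
  let x (n : ℕ) := pick (R n)
  let I : Set ℕ := {n | (R n).Nonempty}
  have hanti : Antitone R := uncovered_antitone Q pick A
  have hRA (n : ℕ) : R n ⊆ A := hanti n.zero_le
  have hx {n : ℕ} (hn : n ∈ I) : x n ∈ R n := hpick _ (hRA n) hn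
  have hxP {n : ℕ} {y : α} (hy : y ∈ R n) : P (x n) y := hpickP _ (hRA n) ⟨y, hy⟩ y hy
  have hxQ {m n : ℕ} (hmn : m < n) (hn : n ∈ I) : x n ∉ Q (x m) := (hanti hmn (hx hn)).2
  have hne {m n : ℕ} (hmn : m < n) (hn : n ∈ I) : x m ≠ x n := fun h ↦
    hxQ hmn hn (h ▸ hQ _ (hRA n (h ▸ hx hn)))
  have hinj : InjOn x I := fun m hm n hn h ↦ by
    rcases lt_trichotomy m n with hmn | hmn | hmn
    exacts [absurd h (hne hmn hn), hmn, absurd h.symm (hne hmn hm)]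
  have hinv : LeftInvOn (Function.invFunOn x I) x I := hinj.leftInvOn_invFunOn
  refine ⟨x '' I, image_subset_iff.2 fun n hn ↦ hRA n (hx hn), Function.invFunOn x I,
    Function.invFunOn_injOn_image x I, ?_, fun y hy ↦ or_iff_not_imp_left.2 fun hy_cover ↦ ?_⟩
  · rintro _ ⟨m, hm, rfl⟩ _ ⟨n, hn, rfl⟩ hmn
    rw [hinv hm, hinv hn] at hmn
    exact ⟨hxP (hanti hmn.le (hx hn)), hxQ hmn hn⟩
  · have hyR (n : ℕ) : y ∈ R n := mem_uncovered_of_forall_notMem hy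
      (fun n hn hyQ ↦ hy_cover ⟨x n, mem_image_of_mem x hn, hyQ⟩) n
    have hI : I = univ := eq_univ_of_forall fun n ↦ ⟨y, hyR n⟩
    exact ⟨(hI ▸ infinite_univ).image hinj, forall_mem_image.2 fun n _ ↦ hxP (hyR n)⟩

end Greedy

section NearMaximum

theorem exists_mem_forall_mul_le {T : Set ℝ} {c : ℝ} (hc : c < 1) (hT : T.Nonempty)
    (hbdd : BddAbove T) (hpos : ∀ b ∈ T, 0 < b) : ∃ a ∈ T, ∀ b ∈ T, c * b ≤ a := by
  obtain hc₀ | hc₀ := le_or_gt c 0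
  · obtain ⟨a, ha⟩ := hT
    exact ⟨a, ha, fun b hb ↦
      (mul_nonpos_of_nonpos_of_nonneg hc₀ (hpos b hb).le).trans (hpos a ha).le⟩
  · have hsup : 0 < sSup T := hT.elim fun a ha ↦ (hpos a ha).trans_le (le_csSup hbdd ha)
    obtain ⟨a, ha, hlt⟩ := exists_lt_of_lt_csSup hT (mul_lt_of_lt_one_left hsup hc)
    exact ⟨a, ha, fun b hb ↦ (mul_le_mul_of_nonneg_left (le_csSup hbdd hb) hc₀.le).trans hlt.le⟩

variable {ι : Type*} [Finite ι]

theorem exists_mem_forall_smul_le_of_isChain {W : Set (ι → ℝ)} {c : ℝ} (hc : c < 1)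
    (hW : W.Nonempty) (hchain : IsChain (· ≤ ·) W) (hbdd : BddAbove W)
    (hpos : ∀ b ∈ W, ∀ j, 0 < b j) : ∃ a ∈ W, ∀ b ∈ W, c • b ≤ a := by
  have exists_coord (j : ι) : ∃ a : W, ∀ b ∈ W, c * b j ≤ a.1 j := by
    obtain ⟨_, ⟨a, ha, rfl⟩, h⟩ := exists_mem_forall_mul_le hc (hW.image (Function.eval j))
      ((Function.monotone_eval j).map_bddAbove hbdd) (forall_mem_image.2 fun b hb ↦ hpos b hb j)
    exact ⟨⟨a, ha⟩, forall_mem_image.1 h⟩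
  choose g hg using exists_coord
  have : Nonempty W := hW.to_subtype
  obtain ⟨a, ha⟩ := hchain.directedOn.directed_val.finite_le g
  exact ⟨a, a.2, fun b hb j ↦ (hg j b hb).trans (ha j j)⟩

end NearMaximum

theorem finite_of_isBounded_of_pairwise_not_abs_sub_le {ι : Type*} [Finite ι]
    {S : Set (ι → ℝ)} {ε : ι → ℝ} (hS : Bornology.IsBounded S) (hε : ∀ j, 0 < ε j)
    (hsep : S.Pairwise fun x y ↦ ¬ |x - y| ≤ ε) : S.Finite := by
  have := Fintype.ofFinite ι
  by_contra hinf
  obtain ⟨a, -, ha⟩ := Set.Infinite.exists_accPt_of_subset_isCompact hinf hS.isCompact_closure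
    subset_closure
  have hnhds : Icc (a - (1 / 2 : ℝ) • ε) (a + (1 / 2 : ℝ) • ε) ∈ nhds a :=
    pi_Icc_mem_nhds (by simpa using hε) (by simpa using hε)
  obtain ⟨x, hx, y, hy, hxy⟩ := (Set.Infinite.of_accPt (ha.nhds_inter hnhds)).nontrivial
  refine hsep hx.2 hy.2 hxy ?_
  have hxa := mem_Icc_sub_add_iff_abs_sub_le.1 hx.1
  have hya := mem_Icc_sub_add_iff_abs_sub_le.1 hy.1
  calc |x - y| = |(x - a) + (a - y)| := by rw [sub_add_sub_cancel]
    _ ≤ |x - a| + |a - y| := abs_add_le _ _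
    _ ≤ (1 / 2 : ℝ) • ε + (1 / 2 : ℝ) • ε := add_le_add hxa (abs_sub_comm y a ▸ hya)
    _ = ε := by rw [← add_smul, add_halves, one_smul]

section Overlap

theorem abs_sub_le_of_mem_Icc_mul_max {a b v x y : ℝ} {k : ℕ} (hv : 0 < v)
    (hba : 5 / 6 * b ≤ a) (hva : 5 / 6 * v ≤ a) (hxv : x ≤ a + v)
    (hx : x ∈ Icc (k / 2 * max a v) ((k + 1) / 2 * max a v))
    (hy : y ∈ Icc (k / 2 * max b v) ((k + 1) / 2 * max b v)) : |y - x| ≤ a := by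
  have ha_le : a ≤ max a v := le_max_left a v
  have hv_le : v ≤ max a v := le_max_right a v
  have hv_le' : v ≤ max b v := le_max_right b v
  have hmax_le : max a v ≤ a + v / 2 := max_le (by linarith) (by linarith)
  have hmax_le' : max b v ≤ 6 / 5 * a := max_le (by linarith) (by linarith)
  obtain ⟨hx₁, hx₂⟩ := hx
  obtain ⟨hy₁, hy₂⟩ := hy
  have hk : k ≤ 4 := by
    have hmul : (k : ℝ) * max a v ≤ 4 * max a v := by linarith
    exact_mod_cast le_of_mul_le_mul_right hmul (hv.trans_le hv_le)
  refine abs_le'.2 ⟨?_, ?_⟩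
  · calc y - x ≤ (k + 1) / 2 * (6 / 5 * a) - k / 2 * a := by
          refine sub_le_sub (hy₂.trans ?_) (le_trans ?_ hx₁) <;> gcongr
      _ = (k + 6) / 10 * a := by ring
      _ ≤ 1 * a := by
          have hk' : (k : ℝ) ≤ 4 := by exact_mod_cast hk
          gcongr
          · linarith
          · linarith
      _ = a := one_mul a
  · rw [neg_sub]
    obtain rfl | rfl | hk₂ : k = 0 ∨ k = 1 ∨ 2 ≤ k := by omega
    · norm_num only [Nat.cast_zero] at hx₂ hy₁
      linarith
    · norm_num only [Nat.cast_one] at hx₂ hy₁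
      linarith
    · have hk₂' : (2 : ℝ) ≤ k := by exact_mod_cast hk₂
      have hvy : 1 * v ≤ y := le_trans (by gcongr; linarith) hy₁
      linarith

theorem abs_sub_le_of_floor_div_max_eq {a b v x y : ℝ} (hv : 0 < v) (hba : 5 / 6 * b ≤ a)
    (hva : 5 / 6 * v ≤ a) (hx : |x| ≤ a + v)
    (hfloor : ⌊2 * x / max a v⌋ = ⌊2 * y / max b v⌋) : |y - x| ≤ a := by
  have mem_Icc_of_floor (u z : ℝ) : z ∈ Icc ((⌊2 * z / max u v⌋ : ℝ) / 2 * max u v)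
      ((⌊2 * z / max u v⌋ + 1 : ℝ) / 2 * max u v) := by
    have hu : 0 < max u v := lt_max_of_lt_right hv
    have hle := (le_div_iff₀ hu).1 (Int.floor_le (2 * z / max u v))
    have hlt := (div_lt_iff₀ hu).1 (Int.lt_floor_add_one (2 * z / max u v))
    constructor <;> linarith
  have hx_mem := mem_Icc_of_floor a x
  have hy_mem := mem_Icc_of_floor b y
  rw [← hfloor] at hy_mem
  generalize ⌊2 * x / max a v⌋ = k at hx_mem hy_mem
  obtain ⟨hx_pos, hx_neg⟩ := abs_le'.1 hx
  obtain ⟨n, rfl | rfl⟩ : ∃ n : ℕ, k = n ∨ k = -(n + 1) := by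
    cases k with
    | ofNat n => exact ⟨n, .inl rfl⟩
    | negSucc n => exact ⟨n, .inr (Int.negSucc_eq n)⟩
  · exact abs_sub_le_of_mem_Icc_mul_max hv hba hva hx_pos (by simpa using hx_mem)
      (by simpa using hy_mem)
  · rw [abs_sub_comm, ← neg_sub_neg]
    refine abs_sub_le_of_mem_Icc_mul_max (k := n) hv hba hva hx_neg ?_ ?_
    · push_cast at hx_mem
      constructor <;> linarith [hx_mem.1, hx_mem.2]
    · push_cast at hy_mem
      constructor <;> linarith [hy_mem.1, hy_mem.2]

theorem floor_div_max_mem_Icc {a v x : ℝ} (hv : 0 < v) (hx : |x| ≤ a + v) :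
    ⌊2 * x / max a v⌋ ∈ Finset.Icc (-4) 4 := by
  have hu : 0 < max a v := lt_max_of_lt_right hv
  have habs : |2 * x / max a v| ≤ 4 := by
    rw [abs_div, abs_mul, abs_two, abs_of_pos hu, div_le_iff₀ hu]
    linarith [le_max_left a v, le_max_right a v]
  obtain ⟨hge, hle⟩ := abs_le.1 habs
  exact Finset.mem_Icc.2 ⟨Int.le_floor.2 (by simpa using hge),
    Int.floor_le_iff.2 (by push_cast; linarith)⟩

end Overlap

section BoxPrecedes

variable {ι : Type*}

/-- Given half-widths `w`, a greedy selection of boxes may choose the center `x` before the center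
`y`: the box at `x` is not much smaller than the one at `y`, and it leaves `y` uncovered. The factor
`5 / 6` is what the case `k = 4` of `abs_sub_le_of_mem_Icc_mul_max` requires. -/
def BoxPrecedes (w : (ι → ℝ) → ι → ℝ) (x y : ι → ℝ) : Prop :=
  (5 / 6 : ℝ) • w y ≤ w x ∧ y ∉ Icc (x - w x) (x + w x)

variable {w : (ι → ℝ) → ι → ℝ} {A s : Set (ι → ℝ)} {t : (ι → ℝ) → ℕ}

theorem encard_le_of_pairwise_boxPrecedes [Fintype ι] {S : Set (ι → ℝ)} {y : ι → ℝ}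
    (hy : ∀ j, 0 < w y j) (hS : S.Pairwise fun x z ↦ BoxPrecedes w x z ∨ BoxPrecedes w z x)
    (hlarge : ∀ x ∈ S, (5 / 6 : ℝ) • w y ≤ w x) (hmeet : ∀ x ∈ S, |x - y| ≤ w x + w y) :
    S.encard ≤ 9 ^ Fintype.card ι := by
  classical
  let record (x : ι → ℝ) (j : ι) : ℤ := ⌊2 * (x j - y j) / max (w x j) (w y j)⌋
  have hmaps : MapsTo record S (Fintype.piFinset fun _ : ι ↦ Finset.Icc (-4 : ℤ) 4) :=
    fun x hx ↦ Finset.mem_coe.2 <| Fintype.mem_piFinset.2 fun j ↦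
      floor_div_max_mem_Icc (hy j) (hmeet x hx j)
  have not_precedes {x z : ι → ℝ} (hx : x ∈ S) (h : record x = record z) :
      ¬ BoxPrecedes w x z := by
    rintro ⟨hxz, hz⟩
    refine hz (mem_Icc_sub_add_iff_abs_sub_le.2 fun j ↦ ?_)
    simpa using abs_sub_le_of_floor_div_max_eq (hy j) (hxz j) (hlarge x hx j) (hmeet x hx j)
      (congrFun h j)
  have hinj : InjOn record S := fun x hx z hz h ↦ by
    by_contra hne
    exact (hS hx hz hne).elim (not_precedes hx h) (not_precedes hz h.symm)
  calc S.encard ≤ _ := encard_le_encard_of_injOn hmaps hinj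
    _ = 9 ^ Fintype.card ι := by
      rw [encard_coe_eq_coe_finsetCard, Fintype.card_piFinset]
      simp

theorem exists_coloring_of_boxPrecedes [Fintype ι] (hw : ∀ x ∈ s, ∀ j, 0 < w x j) (ht : InjOn t s)
    (hs : ∀ x ∈ s, ∀ y ∈ s, t x < t y → BoxPrecedes w x y) :
    ∃ f : (ι → ℝ) → Fin (9 ^ Fintype.card ι + 1),
      ∀ x ∈ s, ∀ y ∈ s, x ≠ y → f x = f y → ¬ |x - y| ≤ w x + w y := by
  let r (x y : ι → ℝ) : Prop := x ∈ s ∧ y ∈ s ∧ t x < t y ∧ |x - y| ≤ w x + w y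
  have hr : WellFounded r := Subrelation.wf (fun h ↦ h.2.2.1) (measure t).wf
  have hpair : s.Pairwise fun x z ↦ BoxPrecedes w x z ∨ BoxPrecedes w z x :=
    fun x hx z hz hne ↦ (ht.ne hx hz hne).lt_or_gt.imp (hs x hx z hz) (hs z hz x hx)
  have hcard (y : ι → ℝ) : {x | r x y}.encard < ENat.card (Fin (9 ^ Fintype.card ι + 1)) := by
    by_cases hy : y ∈ s
    · have hle : {x | r x y}.encard ≤ 9 ^ Fintype.card ι :=
        encard_le_of_pairwise_boxPrecedes (hw y hy) (hpair.mono fun x hx ↦ hx.1)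
          (fun x hx ↦ (hs x hx.1 y hy hx.2.2.1).1) (fun x hx ↦ hx.2.2.2)
      refine hle.trans_lt ?_
      rw [ENat.card_eq_coe_fintype_card, Fintype.card_fin]
      exact_mod_cast Nat.lt_succ_self _
    · have hempty : {x | r x y} = ∅ := eq_empty_of_forall_notMem fun x hx ↦ hy hx.2.1
      simp [hempty]
  obtain ⟨f, hf⟩ := exists_coloring_of_wellFounded hr hcard
  refine ⟨f, fun x hx y hy hne hfxy hmeet ↦ ?_⟩
  rcases (ht.ne hx hy hne).lt_or_gt with h | h
  · exact hf x y ⟨hx, hy, h, hmeet⟩ hfxy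
  · exact hf y x ⟨hy, hx, h, by rwa [abs_sub_comm, add_comm]⟩ hfxy.symm

theorem exists_cover_boxPrecedes [Finite ι] (hA : Bornology.IsBounded A)
    (hw : ∀ x ∈ A, ∀ j, 0 < w x j)
    (hchain : IsChain (· ≤ ·) (w '' A)) (hbdd : BddAbove (w '' A)) :
    ∃ s ⊆ A, ∃ t : (ι → ℝ) → ℕ, InjOn t s ∧
      (∀ x ∈ s, ∀ y ∈ s, t x < t y → BoxPrecedes w x y) ∧
      A ⊆ ⋃ x ∈ s, Icc (x - w x) (x + w x) := by
  have self_mem : ∀ x ∈ A, x ∈ Icc (x - w x) (x + w x) := fun x hx ↦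
    mem_Icc_sub_add_iff_abs_sub_le.2 (by simpa using show 0 ≤ w x from fun j ↦ (hw x hx j).le)
  have exists_large : ∀ R ⊆ A, R.Nonempty → ∃ x ∈ R, ∀ z ∈ R, (5 / 6 : ℝ) • w z ≤ w x := by
    intro R hRA hR
    have hW : w '' R ⊆ w '' A := image_mono hRA
    simpa using exists_mem_forall_smul_le_of_isChain (c := 5 / 6) (by norm_num) (hR.image w)
      (hchain.mono hW) (hbdd.mono hW) (forall_mem_image.2 fun x hx ↦ hw x (hRA hx))
  obtain ⟨s, hsA, t, ht, hst, hcover⟩ := exists_greedy_selection self_mem exists_large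
  refine ⟨s, hsA, t, ht, hst, fun y hy ↦ ?_⟩
  obtain hcov | ⟨hinf, hlarge⟩ := hcover y hy
  · simpa only [mem_iUnion₂, exists_prop] using hcov
  · have not_le {x z : ι → ℝ} (hx : x ∈ s) (hz : z ∈ s) (h : t x < t z) :
        ¬ |z - x| ≤ (5 / 6 : ℝ) • w y := fun hle ↦
      (hst x hx z hz h).2 (mem_Icc_sub_add_iff_abs_sub_le.2 (hle.trans (hlarge x hx)))
    refine absurd (finite_of_isBounded_of_pairwise_not_abs_sub_le (ε := (5 / 6 : ℝ) • w y)
      (hA.subset hsA) (fun j ↦ mul_pos (by norm_num) (hw y hy j)) fun x hx z hz hne ↦ ?_) hinf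
    rcases (ht.ne hx hz hne).lt_or_gt with h | h
    · exact abs_sub_comm x z ▸ not_le hx hz h
    · exact not_le hz hx h

end BoxPrecedes

theorem besicovitch_comparable_intervals_general {ι : Type*} [Fintype ι] {A : Set (ι → ℝ)}
    (hA : Bornology.IsBounded A) {w : (ι → ℝ) → ι → ℝ} (hw : ∀ x ∈ A, ∀ j, 0 < w x j)
    (hcomp : ∀ x ∈ A, ∀ y ∈ A, w x ≤ w y ∨ w y ≤ w x) :
    ∃ s : Set (ι → ℝ), s.Countable ∧ s ⊆ A ∧ (A ⊆ ⋃ x ∈ s, Icc (x - w x) (x + w x)) ∧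
      ∃ f : (ι → ℝ) → Fin (9 ^ Fintype.card ι + 1), ∀ x ∈ s, ∀ y ∈ s, x ≠ y → f x = f y →
        Disjoint (Icc (x - w x) (x + w x)) (Icc (y - w y) (y + w y)) := by
  let D (_ : ι) : ℝ := Metric.diam A + 1
  have hD (j : ι) : 0 < D j := by positivity
  have hAD {x y : ι → ℝ} (hx : x ∈ A) (hy : y ∈ A) : |x - y| ≤ D := fun j ↦
    ((dist_le_pi_dist x y j).trans (Metric.dist_le_diam_of_mem hA hx hy)).trans (by simp [D])
  let v (x : ι → ℝ) : ι → ℝ := w x ⊓ D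
  have hv (x) (hx : x ∈ A) (j : ι) : 0 < v x j := lt_min (hw x hx j) (hD j)
  have hchain : IsChain (· ≤ ·) (v '' A) := by
    rintro _ ⟨x, hx, rfl⟩ _ ⟨y, hy, rfl⟩ -
    exact (hcomp x hx y hy).imp (inf_le_inf_right D) (inf_le_inf_right D)
  have hbdd : BddAbove (v '' A) := ⟨D, forall_mem_image.2 fun _ _ ↦ inf_le_right⟩
  obtain ⟨s, hsA, t, ht, hst, hcover⟩ := exists_cover_boxPrecedes hA hv hchain hbdd
  obtain ⟨f, hf⟩ := exists_coloring_of_boxPrecedes (fun x hx ↦ hv x (hsA hx)) ht hst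
  refine ⟨s, countable_of_injective_of_countable_image ht (to_countable _), hsA,
    hcover.trans (iUnion₂_mono fun x _ ↦ ?_), f, fun x hx y hy hne hfxy ↦ ?_⟩
  · exact Icc_subset_Icc (sub_le_sub_left inf_le_left x) (add_le_add_right inf_le_left x)
  · by_contra hmeet
    exact hf x hx y hy hne hfxy <| le_inf_add_inf_of_le (fun j ↦ (hw x (hsA hx) j).le)
      (fun j ↦ (hw y (hsA hy) j).le) (fun j ↦ (hD j).le) (hAD (hsA hx) (hsA hy))
      (abs_sub_le_add_of_not_disjoint_Icc hmeet)

/-- Lemma 2.4 (Besicovitch's covering theorem for comparable closed intervals).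
There is `M = M(N)` such that: for every bounded set `A ⊆ ℝ^N` and every family of
closed intervals `Q(x) = ∏_j [x_j - w(x)_j, x_j + w(x)_j]` centered at the points
`x ∈ A` which are pairwise comparable (any two of them can be translated to be
concentric with one contained in the other, i.e. their half-width vectors are
comparable coordinatewise), there is a countable subfamily, centered at points of a
countable set `s ⊆ A`, which covers `A` and which can be divided into at most `M`
families of pairwise disjoint intervals. -/
theorem besicovitch_comparable_intervals (N : ℕ) (hN : 1 ≤ N) :
    ∃ M : ℕ, 0 < M ∧
      ∀ A : Set (Fin N → ℝ), Bornology.IsBounded A →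
      ∀ w : (Fin N → ℝ) → (Fin N → ℝ),
        (∀ x ∈ A, ∀ j, 0 < w x j) →
        (∀ x₁ ∈ A, ∀ x₂ ∈ A, (∀ j, w x₁ j ≤ w x₂ j) ∨ (∀ j, w x₂ j ≤ w x₁ j)) →
        ∃ s : Set (Fin N → ℝ), s.Countable ∧ s ⊆ A ∧
          (A ⊆ ⋃ x ∈ s, Set.Icc (x - w x) (x + w x)) ∧
          ∃ f : (Fin N → ℝ) → Fin M,
            ∀ x ∈ s, ∀ y ∈ s, x ≠ y → f x = f y →
              Disjoint (Set.Icc (x - w x) (x + w x)) (Set.Icc (y - w y) (y + w y)) := by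
  exact ⟨9 ^ Fintype.card (Fin N) + 1, Nat.succ_pos _, fun _ hA _ hw hcomp ↦
    besicovitch_comparable_intervals_general hA hw hcomp⟩
end
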